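/- arXiv:1110.3493 — 3 statements merged into one kernel-verified Lean document; each statement's English description precedes it below -/
import Mathlib

section
/- For every integer l ≥ 3, the sum of double zeta values ∑_{j=2}^{l-1} ζ₂(l-j, j) equals ζ(l), where ζ₂(k₁,k₂) = ∑_{1≤m₁<m₂} 1/(m₁^{k₁} m₂^{k₂}) and ζ is the Riemann zeta function. -/
open scoped BigOperators

/-- Double zeta value `ζ₂(k₁,k₂) = ∑_{1 ≤ m < m+n} 1/(m^{k₁} (m+n)^{k₂})`. -/
noncomputable def zeta2 (k1 k2 : ℕ) : ℂ :=
  ∑' p : ℕ × ℕ, 1 / (((p.1 : ℂ) + 1) ^ k1 * ((p.1 : ℂ) + 1 + ((p.2 : ℂ) + 1)) ^ k2)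

theorem hasSum_one_div_sub_one_div_succ (a : ℕ) :
    HasSum (fun n : ℕ => 1 / ((n : ℝ) + 1 + a) - 1 / ((n : ℝ) + 1 + (a + 1 : ℕ)))
      (1 / ((a : ℝ) + 1)) := by
  rw [hasSum_iff_tendsto_nat_of_nonneg]
  · have h (n : ℕ) : ∑ i ∈ Finset.range n,
        (1 / ((i : ℝ) + 1 + a) - 1 / ((i : ℝ) + 1 + (a + 1 : ℕ))) =
        1 / ((a : ℝ) + 1) - 1 / ((n : ℝ) + 1 + a) := by
      induction n with
      | zero => simp [add_comm]
      | succ n ih =>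
        rw [Finset.sum_range_succ, ih]
        push_cast
        ring
    simp only [h]
    have ht : Filter.Tendsto (fun n : ℕ => 1 / ((n : ℝ) + 1 + a)) Filter.atTop (nhds 0) := by
      have := (Filter.tendsto_add_atTop_iff_nat a).2
        (tendsto_one_div_add_atTop_nhds_zero_nat (𝕜 := ℝ))
      refine this.congr fun n => ?_
      push_cast
      ring
    simpa using ht.const_sub (1 / ((a : ℝ) + 1))
  · intro n
    rw [sub_nonneg]
    apply one_div_le_one_div_of_le (by positivity)
    push_cast
    linarith

theorem hasSum_one_div_sub_one_div_add (a : ℕ) :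
    HasSum (fun n : ℕ => 1 / ((n : ℝ) + 1) - 1 / ((n : ℝ) + 1 + a))
      (∑ i ∈ Finset.range a, 1 / ((i : ℝ) + 1)) := by
  induction a with
  | zero => simp
  | succ a ih =>
    rw [Finset.sum_range_succ]
    convert ih.add (hasSum_one_div_sub_one_div_succ a) using 2
    ring

theorem one_div_mul_mul_add_le {x y : ℝ} (hx : 0 < x) (hy : 0 < y) :
    1 / (x * y * (x + y)) ≤ 1 / x ^ (3 / 2 : ℝ) * (1 / y ^ (3 / 2 : ℝ)) := by
  have h (z : ℝ) (hz : 0 < z) : z ^ (3 / 2 : ℝ) = z * √z := by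
    rw [Real.sqrt_eq_rpow, show (3 / 2 : ℝ) = 1 + 1 / 2 by norm_num, Real.rpow_add hz,
      Real.rpow_one]
  rw [h x hx, h y hy, one_div_mul_one_div]
  apply one_div_le_one_div_of_le (by positivity)
  have : √x * √y ≤ x + y := by
    nlinarith [sq_nonneg (√x - √y), Real.sq_sqrt hx.le, Real.sq_sqrt hy.le]
  calc x * √x * (y * √y) = x * y * (√x * √y) := by ring
    _ ≤ _ := by gcongr

theorem summable_one_div_mul_mul_add :
    Summable fun p : ℕ × ℕ =>
      1 / (((p.1 : ℝ) + 1) * ((p.2 : ℝ) + 1) * ((p.1 : ℝ) + 1 + ((p.2 : ℝ) + 1))) := by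
  have h : Summable fun n : ℕ => 1 / ((n : ℝ) + 1) ^ (3 / 2 : ℝ) := by
    have := (summable_nat_add_iff 1).2
      (Real.summable_one_div_nat_rpow (p := 3 / 2) |>.2 (by norm_num))
    exact_mod_cast this
  refine Summable.of_nonneg_of_le (fun p => by positivity) (fun p => ?_)
    (h.mul_of_nonneg h (fun n => by positivity) (fun n => by positivity))
  exact one_div_mul_mul_add_le (by positivity) (by positivity)

theorem sum_one_div_pow_mul_pow {a n : ℝ} (ha : 0 < a) (hn : 0 < n) (k : ℕ) :
    ∑ j ∈ Finset.Icc 2 (k + 2), 1 / (a ^ (k + 3 - j) * (a + n) ^ j) =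
      1 / (a ^ (k + 1) * n * (a + n)) - 1 / (n * (a + n) ^ (k + 2)) := by
  have hb : a + n ≠ 0 := by positivity
  induction k with
  | zero =>
    simp
    field_simp
    ring
  | succ k ih =>
    rw [show k + 1 + 2 = (k + 2) + 1 by ring, Finset.sum_Icc_succ_top (by omega)]
    have h : ∑ j ∈ Finset.Icc 2 (k + 2), 1 / (a ^ (k + 1 + 3 - j) * (a + n) ^ j) =
        1 / a * ∑ j ∈ Finset.Icc 2 (k + 2), 1 / (a ^ (k + 3 - j) * (a + n) ^ j) := by
      rw [Finset.mul_sum]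
      refine Finset.sum_congr rfl fun j hj => ?_
      rw [Finset.mem_Icc] at hj
      rw [show k + 1 + 3 - j = (k + 3 - j) + 1 by omega, pow_succ]
      field_simp
    rw [h, ih, show k + 1 + 3 - (k + 2 + 1) = 1 by omega]
    field_simp
    ring

theorem hasSum_of_hasSum_prod_pow_mul {k : ℕ} {s : ℝ}
    (h : HasSum (fun p : ℕ × ℕ => 1 / (((p.1 : ℝ) + 1) ^ (k + 1) * ((p.2 : ℝ) + 1) *
      ((p.1 : ℝ) + 1 + ((p.2 : ℝ) + 1)))) s) :
    HasSum (fun m : ℕ => (∑ i ∈ Finset.range (m + 1), 1 / ((i : ℝ) + 1)) *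
      (1 / ((m : ℝ) + 1) ^ (k + 2))) s := by
  refine h.prod_fiberwise fun m => ?_
  refine ((hasSum_one_div_sub_one_div_add (m + 1)).mul_right _).congr_fun fun n => ?_
  push_cast
  field_simp
  ring

theorem hasSum_of_hasSum_prod_mul_pow {k : ℕ} {s : ℝ}
    (h : HasSum (fun p : ℕ × ℕ => 1 / (((p.2 : ℝ) + 1) *
      ((p.1 : ℝ) + 1 + ((p.2 : ℝ) + 1)) ^ (k + 2))) s) :
    HasSum (fun m : ℕ => (∑ i ∈ Finset.range m, 1 / ((i : ℝ) + 1)) *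
      (1 / ((m : ℝ) + 1) ^ (k + 2))) s := by
  rw [← hasSum_nat_add_iff' 1]
  simp only [Finset.range_one, Finset.sum_singleton, Finset.range_zero, Finset.sum_empty,
    zero_mul, sub_zero]
  rw [← (Finset.HasAntidiagonal.sigmaAntidiagonalEquivProd (A := ℕ)).hasSum_iff] at h
  refine h.sigma fun m => ?_
  have hm : ∑ p ∈ Finset.HasAntidiagonal.antidiagonal m, 1 / (((p.2 : ℝ) + 1) *
      ((p.1 : ℝ) + 1 + ((p.2 : ℝ) + 1)) ^ (k + 2)) =
      (∑ i ∈ Finset.range (m + 1), 1 / ((i : ℝ) + 1)) *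
        (1 / (((m + 1 : ℕ) : ℝ) + 1) ^ (k + 2)) := by
    rw [← Finset.Nat.sum_antidiagonal_swap, Finset.Nat.sum_antidiagonal_eq_sum_range_succ_mk,
      Finset.sum_mul]
    refine Finset.sum_congr rfl fun i hi => ?_
    rw [Finset.mem_range] at hi
    simp only [Prod.swap, Nat.cast_sub (Nat.lt_succ_iff.1 hi)]
    rw [one_div_mul_one_div]
    push_cast
    ring_nf
  rw [← hm]
  exact Finset.hasSum _ _

theorem summable_one_div_pow_mul_pow {k₁ k₂ : ℕ} (h₁ : 1 ≤ k₁) (h₂ : 2 ≤ k₂) :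
    Summable fun p : ℕ × ℕ =>
      1 / (((p.1 : ℝ) + 1) ^ k₁ * ((p.1 : ℝ) + 1 + ((p.2 : ℝ) + 1)) ^ k₂) := by
  refine Summable.of_nonneg_of_le (fun p => by positivity) (fun p => ?_)
    summable_one_div_mul_mul_add
  have hx : (0 : ℝ) ≤ p.1 := by positivity
  have hy : (0 : ℝ) ≤ p.2 := by positivity
  apply one_div_le_one_div_of_le (by positivity)
  calc _ ≤ ((p.1 : ℝ) + 1) ^ 1 * ((p.1 : ℝ) + 1 + ((p.2 : ℝ) + 1)) ^ 2 := by
        rw [pow_one, sq, mul_assoc]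
        have : (p.2 : ℝ) + 1 ≤ (p.1 : ℝ) + 1 + ((p.2 : ℝ) + 1) := by linarith
        exact mul_le_mul_of_nonneg_left (mul_le_mul_of_nonneg_right this (by positivity))
          (by positivity)
    _ ≤ _ := by gcongr <;> linarith

theorem zeta2_eq_ofReal_tsum (k₁ k₂ : ℕ) :
    zeta2 k₁ k₂ = ((∑' p : ℕ × ℕ,
      1 / (((p.1 : ℝ) + 1) ^ k₁ * ((p.1 : ℝ) + 1 + ((p.2 : ℝ) + 1)) ^ k₂) : ℝ) : ℂ) := by
  rw [zeta2, Complex.ofReal_tsum]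
  push_cast
  rfl

theorem sum_formula_double_zeta (l : ℕ) (hl : 3 ≤ l) :
    ∑ j ∈ Finset.Icc 2 (l - 1), zeta2 (l - j) j = riemannZeta l := by
  obtain ⟨k, rfl⟩ := Nat.exists_eq_add_of_le' hl
  have hf : Summable fun p : ℕ × ℕ => 1 / (((p.1 : ℝ) + 1) ^ (k + 1) * ((p.2 : ℝ) + 1) *
      ((p.1 : ℝ) + 1 + ((p.2 : ℝ) + 1))) := by
    refine Summable.of_nonneg_of_le (fun p => by positivity) (fun p => ?_)
      summable_one_div_mul_mul_add
    apply one_div_le_one_div_of_le (by positivity)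
    gcongr
    exact le_self_pow₀ (by linarith [Nat.cast_nonneg (α := ℝ) p.1]) (by omega)
  have hF : HasSum (fun p : ℕ × ℕ => ∑ j ∈ Finset.Icc 2 (k + 2),
      1 / (((p.1 : ℝ) + 1) ^ (k + 3 - j) * ((p.1 : ℝ) + 1 + ((p.2 : ℝ) + 1)) ^ j))
      (∑ j ∈ Finset.Icc 2 (k + 2), ∑' p : ℕ × ℕ,
        1 / (((p.1 : ℝ) + 1) ^ (k + 3 - j) * ((p.1 : ℝ) + 1 + ((p.2 : ℝ) + 1)) ^ j)) := by
    refine hasSum_sum fun j hj => ?_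
    rw [Finset.mem_Icc] at hj
    exact (summable_one_div_pow_mul_pow (by omega) hj.1).hasSum
  have hg := hf.hasSum.sub hF
  have hf' := hasSum_of_hasSum_prod_pow_mul hf.hasSum
  have hg' := hasSum_of_hasSum_prod_mul_pow (k := k) (hg.congr_fun fun p => by
    rw [sum_one_div_pow_mul_pow (by positivity) (by positivity), sub_sub_cancel])
  have hz := hf'.sub hg'
  rw [sub_sub_cancel] at hz
  simp only [show k + 3 - 1 = k + 2 by omega, zeta2_eq_ofReal_tsum]
  rw [← Complex.ofReal_sum, ← hz.tsum_eq, Complex.ofReal_tsum,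
    zeta_eq_tsum_one_div_nat_add_one_cpow (by norm_cast; omega)]
  refine tsum_congr fun n => ?_
  rw [Finset.sum_range_succ, ← sub_mul, add_sub_cancel_left, one_div_mul_one_div, ← pow_succ',
    Complex.cpow_natCast]
  push_cast
  rfl
end

section
/- For every integer N ≥ 2, ∑_{ν=1}^{N-1} ζ₂(2N-2ν, 2ν) = (3/4) ζ(2N). -/
open scoped BigOperators

/-- Partial sums of the harmonic series, as real numbers. -/
noncomputable def harmonicSum (n : ℕ) : ℝ := ∑ i ∈ Finset.range n, 1 / ((i : ℝ) + 1)

theorem harmonicSum_add (n p : ℕ) :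
    harmonicSum (n + p)
      = harmonicSum n + ∑ i ∈ Finset.range p, 1 / ((n : ℝ) + (i : ℝ) + 1) := by
  simp [harmonicSum, Finset.sum_range_add]

theorem sum_one_div_mul_shift (p : ℕ) (hp : 0 < p) (n : ℕ) :
    ∑ i ∈ Finset.range n, 1 / (((i : ℝ) + 1) * ((i : ℝ) + 1 + p))
      = (harmonicSum p - ∑ i ∈ Finset.range p, 1 / ((n : ℝ) + (i : ℝ) + 1)) / p := by
  have hp' : (0 : ℝ) < p := by exact_mod_cast hp
  have h1 := harmonicSum_add n p
  have h2 := harmonicSum_add p n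
  rw [add_comm p n] at h2
  have h3 : ∑ i ∈ Finset.range n, 1 / (((i : ℝ) + 1) * ((i : ℝ) + 1 + p))
      = (harmonicSum n - ∑ i ∈ Finset.range n, 1 / ((p : ℝ) + (i : ℝ) + 1)) / p := by
    rw [harmonicSum, ← Finset.sum_sub_distrib, Finset.sum_div]
    refine Finset.sum_congr rfl fun i _ => ?_
    have : (0 : ℝ) < (i : ℝ) + 1 := by positivity
    field_simp
    ring
  rw [h3]
  congr 1
  linarith

theorem hasSum_one_div_mul_shift (p : ℕ) (hp : 0 < p) :
    HasSum (fun i : ℕ => 1 / (((i : ℝ) + 1) * ((i : ℝ) + 1 + p))) (harmonicSum p / p) := by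
  rw [hasSum_iff_tendsto_nat_of_nonneg (fun i => by positivity)]
  simp_rw [sum_one_div_mul_shift p hp]
  have h : Filter.Tendsto
      (fun n : ℕ => ∑ i ∈ Finset.range p, 1 / ((n : ℝ) + (i : ℝ) + 1)) Filter.atTop (nhds 0) := by
    rw [← Finset.sum_const_zero (s := Finset.range p)]
    refine tendsto_finsetSum _ fun i _ => ?_
    have := (tendsto_one_div_add_atTop_nhds_zero_nat (𝕜 := ℝ)).comp
      (Filter.tendsto_add_atTop_nat i)
    refine this.congr fun n => ?_
    simp
  simpa using (tendsto_const_nhds.sub h).div_const (p : ℝ)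

theorem sum_antidiagonal_one_div (k : ℕ) :
    ∑ q ∈ Finset.HasAntidiagonal.antidiagonal k, 1 / (((q.2 : ℝ) + 1) * (2 * (q.1 : ℝ) + q.2 + 3))
      = (harmonicSum (2 * k + 3) - 1 / ((k : ℝ) + 2)) / (2 * ((k : ℝ) + 2)) := by
  have h1 : ∑ q ∈ Finset.HasAntidiagonal.antidiagonal k, 1 / (((q.2 : ℝ) + 1) * (2 * (q.1 : ℝ) + q.2 + 3))
      = ∑ q ∈ Finset.HasAntidiagonal.antidiagonal k,
        (1 / ((q.2 : ℝ) + 1) + 1 / ((k : ℝ) + q.1 + 3)) / (2 * ((k : ℝ) + 2)) := by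
    refine Finset.sum_congr rfl fun q hq => ?_
    have hk : (k : ℝ) = q.1 + q.2 := by exact_mod_cast (Finset.HasAntidiagonal.mem_antidiagonal.1 hq).symm
    rw [hk]
    field_simp
    ring
  rw [h1, ← Finset.sum_div, Finset.sum_add_distrib]
  congr 1
  have h2 : ∑ q ∈ Finset.HasAntidiagonal.antidiagonal k, 1 / ((q.2 : ℝ) + 1) = harmonicSum (k + 1) := by
    rw [← Finset.Nat.sum_antidiagonal_swap, harmonicSum,
      Finset.Nat.sum_antidiagonal_eq_sum_range_succ_mk]
    rfl
  have h3 : ∑ q ∈ Finset.HasAntidiagonal.antidiagonal k, 1 / ((k : ℝ) + q.1 + 3)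
      = ∑ i ∈ Finset.range (k + 1), 1 / (((k + 2 : ℕ) : ℝ) + (i : ℝ) + 1) := by
    rw [Finset.Nat.sum_antidiagonal_eq_sum_range_succ_mk]
    refine Finset.sum_congr rfl fun i _ => ?_
    push_cast
    ring_nf
  have h4 := harmonicSum_add (k + 2) (k + 1)
  have h5 : harmonicSum (k + 2) = harmonicSum (k + 1) + 1 / ((k : ℝ) + 2) := by
    rw [harmonicSum, Finset.sum_range_succ, ← harmonicSum]
    push_cast
    ring_nf
  rw [h2, h3, show 2 * k + 3 = k + 2 + (k + 1) by ring]
  linarith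

theorem summable_one_div_sq_mul_sq :
    Summable fun p : ℕ × ℕ => 1 / (((p.1 : ℝ) + 1) ^ 2 * ((p.2 : ℝ) + 1) ^ 2) := by
  have h : Summable fun n : ℕ => 1 / ((n : ℝ) + 1) ^ 2 := by
    simpa using (summable_nat_add_iff 1).2 (Real.summable_one_div_nat_pow.2 one_lt_two)
  refine (h.mul_of_nonneg h (fun _ => by positivity) fun _ => by positivity).congr fun p => ?_
  rw [one_div_mul_one_div]

theorem summable_zeta2_term (a b : ℕ) (ha : 2 ≤ a) (hb : 2 ≤ b) :
    Summable fun p : ℕ × ℕ =>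
      1 / (((p.1 : ℝ) + 1) ^ a * ((p.1 : ℝ) + 1 + ((p.2 : ℝ) + 1)) ^ b) := by
  refine summable_one_div_sq_mul_sq.of_nonneg_of_le (fun p => by positivity) fun p => ?_
  have hx : (0 : ℝ) ≤ p.1 := by positivity
  have hy : (0 : ℝ) ≤ p.2 := by positivity
  have h1 : ((p.1 : ℝ) + 1) ^ 2 ≤ ((p.1 : ℝ) + 1) ^ a := pow_le_pow_right₀ (by linarith) ha
  have h2 : ((p.2 : ℝ) + 1) ^ 2 ≤ ((p.1 : ℝ) + 1 + ((p.2 : ℝ) + 1)) ^ b :=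
    (pow_le_pow_left₀ (by linarith) (by linarith) 2).trans (pow_le_pow_right₀ (by linarith) hb)
  gcongr

theorem zeta2_eq_ofReal (a b : ℕ) :
    zeta2 a b = ((∑' p : ℕ × ℕ,
      1 / (((p.1 : ℝ) + 1) ^ a * ((p.1 : ℝ) + 1 + ((p.2 : ℝ) + 1)) ^ b) : ℝ) : ℂ) := by
  rw [zeta2, Complex.ofReal_tsum]
  push_cast
  rfl

theorem sum_one_div_even_pow (N : ℕ) (hN : 2 ≤ N) (x y : ℝ) (hx : 0 < x) (hy : 0 < y) :
    ∑ ν ∈ Finset.Icc 1 (N - 1), 1 / (x ^ (2 * N - 2 * ν) * (x + y) ^ (2 * ν))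
      = 1 / x ^ (2 * (N - 1)) * (1 / (y * (2 * x + y)))
        - 1 / (x + y) ^ (2 * (N - 1)) * (1 / (y * (2 * x + y))) := by
  obtain ⟨n, rfl⟩ : ∃ n, N = n + 1 := ⟨N - 1, by omega⟩
  clear hN
  simp only [Nat.add_sub_cancel]
  induction n with
  | zero => simp
  | succ n ih =>
    rw [Finset.sum_Icc_succ_top (by omega)]
    have h : ∑ ν ∈ Finset.Icc 1 n, 1 / (x ^ (2 * (n + 1 + 1) - 2 * ν) * (x + y) ^ (2 * ν))
        = (∑ ν ∈ Finset.Icc 1 n, 1 / (x ^ (2 * (n + 1) - 2 * ν) * (x + y) ^ (2 * ν))) / x ^ 2 := by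
      rw [Finset.sum_div]
      refine Finset.sum_congr rfl fun ν hν => ?_
      have := (Finset.mem_Icc.1 hν).2
      rw [show 2 * (n + 1 + 1) - 2 * ν = 2 * (n + 1) - 2 * ν + 2 by omega, pow_add, div_div]
      ring
    rw [h, ih, show 2 * (n + 1 + 1) - 2 * (n + 1) = 2 by omega,
      show 2 * (n + 1) = 2 * n + 2 by ring, pow_add, pow_add]
    have hxy : 0 < x + y := by positivity
    field_simp
    ring

theorem GKZ_even_sum_formula (N : ℕ) (hN : 2 ≤ N) :
    ∑ ν ∈ Finset.Icc 1 (N - 1), zeta2 (2 * N - 2 * ν) (2 * ν)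
      = (3 / 4 : ℂ) * riemannZeta (2 * N) := by
  have hF_sum : Summable fun p : ℕ × ℕ => 1 / ((p.1 : ℝ) + 1) ^ (2 * (N - 1)) *
      (1 / (((p.2 : ℝ) + 1) * (2 * ((p.1 : ℝ) + 1) + ((p.2 : ℝ) + 1)))) := by
    refine summable_one_div_sq_mul_sq.of_nonneg_of_le (fun p => by positivity) fun p => ?_
    have hx : (0 : ℝ) ≤ p.1 := by positivity
    have hy : (0 : ℝ) ≤ p.2 := by positivity
    rw [one_div_mul_one_div]
    have h1 : ((p.1 : ℝ) + 1) ^ 2 ≤ ((p.1 : ℝ) + 1) ^ (2 * (N - 1)) :=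
      pow_le_pow_right₀ (by linarith) (by omega)
    have h2 : ((p.2 : ℝ) + 1) ^ 2
        ≤ ((p.2 : ℝ) + 1) * (2 * ((p.1 : ℝ) + 1) + ((p.2 : ℝ) + 1)) := by nlinarith
    gcongr
  have hG_sum : Summable fun p : ℕ × ℕ =>
      1 / ((p.1 : ℝ) + 1 + ((p.2 : ℝ) + 1)) ^ (2 * (N - 1)) *
      (1 / (((p.2 : ℝ) + 1) * (2 * ((p.1 : ℝ) + 1) + ((p.2 : ℝ) + 1)))) := by
    refine hF_sum.of_nonneg_of_le (fun p => by positivity) fun p => ?_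
    have hy : (0 : ℝ) ≤ p.2 := by positivity
    gcongr
    · linarith
    · linarith
  have hF := hF_sum.hasSum.prod_fiberwise (g := fun m : ℕ => 1 / ((m : ℝ) + 1) ^ (2 * (N - 1)) *
      (harmonicSum (2 * (m + 1)) / (2 * ((m : ℝ) + 1)))) fun m => by
    have := (hasSum_one_div_mul_shift (2 * (m + 1)) (by omega)).mul_left
      (1 / ((m : ℝ) + 1) ^ (2 * (N - 1)))
    push_cast at this
    refine this.congr_fun fun n => ?_
    ring_nf
  have hG := (Finset.HasAntidiagonal.sigmaAntidiagonalEquivProd.hasSum_iff.2 hG_sum.hasSum).sigma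
    (g := fun k : ℕ => 1 / ((k : ℝ) + 2) ^ (2 * (N - 1)) *
      ((harmonicSum (2 * k + 3) - 1 / ((k : ℝ) + 2)) / (2 * ((k : ℝ) + 2)))) fun k => by
    rw [← sum_antidiagonal_one_div, Finset.mul_sum, ← Finset.sum_coe_sort]
    convert hasSum_fintype _ using 1
    refine Finset.sum_congr rfl fun q _ => ?_
    have hk : (k : ℝ) = q.1.1 + q.1.2 := by
      exact_mod_cast (Finset.HasAntidiagonal.mem_antidiagonal.1 q.2).symm
    simp only [Function.comp, Finset.HasAntidiagonal.sigmaAntidiagonalEquivProd_apply]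
    rw [hk]
    ring_nf
  have hG' : HasSum (fun m : ℕ => 1 / ((m : ℝ) + 1) ^ (2 * (N - 1)) *
      ((harmonicSum (2 * m + 1) - 1 / ((m : ℝ) + 1)) / (2 * ((m : ℝ) + 1))))
      (∑' p : ℕ × ℕ, 1 / ((p.1 : ℝ) + 1 + ((p.2 : ℝ) + 1)) ^ (2 * (N - 1)) *
      (1 / (((p.2 : ℝ) + 1) * (2 * ((p.1 : ℝ) + 1) + ((p.2 : ℝ) + 1))))) := by
    rw [← hasSum_nat_add_iff' 1, Finset.sum_range_one,
      show harmonicSum (2 * 0 + 1) - 1 / (((0 : ℕ) : ℝ) + 1) = 0 by simp [harmonicSum],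
      zero_div, mul_zero, sub_zero]
    refine hG.congr_fun fun k => ?_
    push_cast
    rw [show 2 * (k + 1) + 1 = 2 * k + 3 by ring, show (k : ℝ) + 1 + 1 = k + 2 by ring]
  have hD := hF.sub hG'
  have hZ := hD.congr_fun (g := fun m : ℕ => 3 / 4 * (1 / ((m : ℝ) + 1) ^ (2 * N))) fun m => by
    have h : harmonicSum (2 * (m + 1)) = harmonicSum (2 * m + 1) + 1 / (2 * (m + 1)) := by
      rw [show 2 * (m + 1) = 2 * m + 1 + 1 by ring, harmonicSum_add,
        Finset.sum_range_one]
      push_cast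
      rw [show 2 * (m : ℝ) + 1 + 0 + 1 = 2 * (m + 1) by ring]
    rw [h, show 2 * N = 2 * (N - 1) + 2 by omega, pow_add]
    field_simp
    ring
  simp_rw [zeta2_eq_ofReal]
  rw [← Complex.ofReal_sum, ← Summable.tsum_finsetSum]
  · simp_rw [fun p : ℕ × ℕ => sum_one_div_even_pow N hN ((p.1 : ℝ) + 1) ((p.2 : ℝ) + 1)
      (by positivity) (by positivity)]
    rw [hF_sum.tsum_sub hG_sum, ← hZ.tsum_eq, tsum_mul_left]
    have hζ := zeta_nat_eq_tsum_of_gt_one (k := 2 * N) (by omega)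
    have hs : Summable fun n : ℕ => 1 / (n : ℂ) ^ (2 * N) :=
      Summable.of_norm (by simpa using Real.summable_one_div_nat_pow.2 (by omega : 1 < 2 * N))
    rw [hs.tsum_eq_zero_add] at hζ
    push_cast at hζ ⊢
    rw [hζ]
    simp [show N ≠ 0 by omega]
  · intro ν hν
    rw [Finset.mem_Icc] at hν
    exact summable_zeta2_term _ _ (by omega) (by omega)
end

section
/- For every integer N ≥ 2, ∑_{ν=1}^{N-1} (4^ν + 4^{N-ν}) ζ₂(2N-2ν, 2ν) = (N + 4/3 + (2/3)·4^{N-1}) ζ(2N). -/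
open scoped BigOperators

section Bernoulli

open PowerSeries Finset

/-- The power series `2 * X / (exp X - 1) + X`, an even function of `X`. -/
noncomputable def evenBernoulliPowerSeries : PowerSeries ℚ :=
  2 * bernoulliPowerSeries ℚ + X

lemma evenBernoulliPowerSeries_mul_exp_sub_one :
    evenBernoulliPowerSeries * (exp ℚ - 1) = X * (exp ℚ + 1) := by
  unfold evenBernoulliPowerSeries
  linear_combination 2 * bernoulliPowerSeries_mul_exp_sub_one ℚ

lemma coeff_evenBernoulliPowerSeries_even (k : ℕ) :
    coeff (2 * k) evenBernoulliPowerSeries = 2 * (bernoulli (2 * k) / (2 * k).factorial) := by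
  have h2 : (2 : PowerSeries ℚ) = C 2 := (map_ofNat C 2).symm
  have hk : 2 * k ≠ 1 := by lia
  simp [evenBernoulliPowerSeries, h2, coeff_C_mul, bernoulliPowerSeries, coeff_X, hk]

lemma coeff_evenBernoulliPowerSeries_odd {n : ℕ} (hn : Odd n) :
    coeff n evenBernoulliPowerSeries = 0 := by
  have h2 : (2 : PowerSeries ℚ) = C 2 := (map_ofNat C 2).symm
  rcases eq_or_ne n 1 with rfl | h1
  · rw [evenBernoulliPowerSeries, map_add, h2, coeff_C_mul]
    norm_num [bernoulliPowerSeries]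
  · have : 1 < n := by have := hn.pos; lia
    simp [evenBernoulliPowerSeries, h2, coeff_C_mul, bernoulliPowerSeries, coeff_X, h1,
      bernoulli_eq_zero_of_odd hn this]

lemma rescale_two_mul_evenBernoulliPowerSeries :
    rescale 2 evenBernoulliPowerSeries * evenBernoulliPowerSeries =
      2 * (evenBernoulliPowerSeries - X * derivative ℚ evenBernoulliPowerSeries) + 2 * X ^ 2 := by
  have h1 := evenBernoulliPowerSeries_mul_exp_sub_one
  have h2 := congrArg (rescale (2 : ℚ)) h1
  have h3 := congrArg (derivative ℚ) h1
  have he : rescale (2 : ℚ) (exp ℚ) = exp ℚ ^ 2 := by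
    simpa using (exp_pow_eq_rescale_exp (A := ℚ) 2).symm
  have hC : (C (2 : ℚ) : PowerSeries ℚ) = 2 := map_ofNat C 2
  simp only [map_mul, map_sub, map_add, map_one, he, rescale_X, hC] at h2
  simp only [Derivation.leibniz, map_sub, map_add, derivative_exp, derivative_one,
    derivative_X, smul_eq_mul] at h3
  have hm : exp ℚ - 1 ≠ 0 := fun h => by
    have := congrArg (coeff 1) h
    simp [coeff_exp, coeff_one] at this
  have hp : exp ℚ + 1 ≠ 0 := fun h => by
    have := congrArg (coeff 1) h
    simp [coeff_exp, coeff_one] at this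
  refine mul_left_cancel₀ (mul_ne_zero (pow_ne_zero 2 hm) hp) ?_
  generalize rescale 2 evenBernoulliPowerSeries = S at *
  generalize derivative ℚ evenBernoulliPowerSeries = D at *
  generalize evenBernoulliPowerSeries = G at *
  generalize exp ℚ = e at *
  linear_combination (S * (e ^ 2 - 1) - (e + 1) * (2 * (e - 1) + 2 * X * e)) * h1
    + X * (e + 1) * h2 + (e + 1) * (2 * X * (e - 1)) * h3

/-- A sum over the antidiagonal of `2 * N` of terms supported on even indices. -/
lemma Finset.sum_antidiagonal_two_mul_of_odd_eq_zero {M : Type*} [AddCommMonoid M] (N : ℕ)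
    (f : ℕ × ℕ → M) (hf : ∀ p, Odd p.1 → f p = 0) :
    ∑ p ∈ antidiagonal (2 * N), f p = ∑ p ∈ antidiagonal N, f (2 * p.1, 2 * p.2) := by
  symm
  refine Finset.sum_of_injOn (fun p => (2 * p.1, 2 * p.2)) ?_ ?_ ?_ ?_
  · rintro ⟨a, b⟩ _ ⟨c, d⟩ _ h
    simp only [Prod.mk.injEq] at h ⊢
    lia
  · rintro ⟨a, b⟩ h
    simp only [mem_coe, HasAntidiagonal.mem_antidiagonal] at h ⊢
    lia
  · rintro ⟨a, b⟩ h h'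
    apply hf
    by_contra ho
    obtain ⟨c, hc⟩ := even_iff_exists_two_mul.mp (Nat.not_odd_iff_even.mp ho)
    apply h'
    simp only [HasAntidiagonal.mem_antidiagonal] at h hc
    refine ⟨(c, N - c), ?_, ?_⟩
    · simp only [mem_coe, HasAntidiagonal.mem_antidiagonal]
      lia
    · simp only [Prod.mk.injEq]
      lia
  · intros
    rfl

lemma sum_range_pow_four_mul_bernoulli (N : ℕ) (hN : 2 ≤ N) :
    ∑ i ∈ range (N + 1), (4 : ℚ) ^ i * (bernoulli (2 * i) / (2 * i).factorial) *
        (bernoulli (2 * (N - i)) / (2 * (N - i)).factorial) =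
      (1 - 2 * N) * (bernoulli (2 * N) / (2 * N).factorial) := by
  have h := congrArg (coeff (2 * N)) rescale_two_mul_evenBernoulliPowerSeries
  have hC : (2 : PowerSeries ℚ) = C 2 := (map_ofNat C 2).symm
  obtain ⟨n, hn⟩ : ∃ n, 2 * N = n + 1 := ⟨2 * N - 1, by lia⟩
  have hD : coeff (2 * N) (X * derivative ℚ evenBernoulliPowerSeries) =
      2 * N * coeff (2 * N) evenBernoulliPowerSeries := by
    have : (2 * N : ℚ) = n + 1 := by exact_mod_cast hn
    rw [this, hn, coeff_succ_X_mul, coeff_derivative, mul_comm]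
  have h2 : 2 * N ≠ 2 := by lia
  rw [coeff_mul, Finset.sum_antidiagonal_two_mul_of_odd_eq_zero, map_add, hC, coeff_C_mul,
    coeff_C_mul, map_sub, hD, coeff_X_pow, if_neg h2] at h
  · simp only [coeff_rescale, coeff_evenBernoulliPowerSeries_even,
      Finset.Nat.sum_antidiagonal_eq_sum_range_succ_mk, pow_mul] at h
    have h4 : (2 : ℚ) ^ 2 = 4 := by norm_num
    rw [h4] at h
    refine mul_left_cancel₀ (four_ne_zero (α := ℚ)) ?_
    rw [mul_sum]
    refine Eq.trans (sum_congr rfl fun i _ => ?_) (h.trans ?_) <;> ring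
  · intro p hp
    rw [coeff_rescale, coeff_evenBernoulliPowerSeries_odd hp, mul_zero, zero_mul]

/-- Splitting off the end terms of a sum over `range (N + 1)`. -/
lemma Finset.sum_range_succ_eq_add_sum_Icc_add {M : Type*} [AddCommMonoid M] (f : ℕ → M) {N : ℕ}
    (hN : 1 ≤ N) : ∑ i ∈ range (N + 1), f i = f 0 + ∑ i ∈ Icc 1 (N - 1), f i + f N := by
  obtain ⟨n, rfl⟩ : ∃ n, N = n + 1 := ⟨N - 1, by lia⟩
  have : Icc 1 (n + 1 - 1) = Ico 1 (n + 1) := by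
    ext; simp
  rw [sum_range_succ, sum_range_succ', this, sum_Ico_eq_sum_range, add_comm (f 0)]
  simp [add_comm 1]

/-- A weighted convolution formula for the even zeta values. -/
lemma sum_pow_four_mul_riemannZeta_mul_riemannZeta (N : ℕ) (hN : 2 ≤ N) :
    ∑ ν ∈ Icc 1 (N - 1), (4 : ℂ) ^ ν * (riemannZeta (2 * ν) * riemannZeta (2 * (N - ν : ℕ))) =
      (N + 4 ^ N / 2) * riemannZeta (2 * N) := by
  have h := sum_range_pow_four_mul_bernoulli N hN
  rw [Finset.sum_range_succ_eq_add_sum_Icc_add _ (by lia)] at h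
  replace h := congrArg (fun q : ℚ => (q : ℂ)) h
  simp only [Nat.sub_zero, Nat.sub_self, mul_zero, pow_zero, bernoulli_zero, Nat.factorial_zero] at h
  push_cast at h
  have hN0 : N ≠ 0 := by lia
  have key : ∀ ν ∈ Icc 1 (N - 1),
      (4 : ℂ) ^ ν * (riemannZeta (2 * ν) * riemannZeta (2 * (N - ν : ℕ))) =
      ((-1) ^ N * 2 ^ (2 * N - 2) * (Real.pi : ℂ) ^ (2 * N)) *
        (4 ^ ν * (bernoulli (2 * ν) / (2 * ν).factorial) *
        (bernoulli (2 * (N - ν)) / (2 * (N - ν)).factorial)) := by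
    intro ν hν
    rw [mem_Icc] at hν
    obtain ⟨a, rfl⟩ : ∃ a, ν = a + 1 := ⟨ν - 1, by lia⟩
    obtain ⟨b, rfl⟩ : ∃ b, N = a + 1 + (b + 1) := ⟨N - a - 2, by lia⟩
    rw [Nat.add_sub_cancel_left, riemannZeta_two_mul_nat a.add_one_ne_zero,
      riemannZeta_two_mul_nat b.add_one_ne_zero,
      show 2 * (a + 1) - 1 = 2 * a + 1 by lia, show 2 * (b + 1) - 1 = 2 * b + 1 by lia,
      show 2 * (a + 1 + (b + 1)) - 2 = 2 * a + 1 + (2 * b + 1) by lia]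
    ring
  rw [sum_congr rfl key, ← mul_sum, riemannZeta_two_mul_nat hN0]
  obtain ⟨n, rfl⟩ : ∃ n, N = n + 1 := ⟨N - 1, by lia⟩
  rw [show 2 * (n + 1) - 1 = 2 * n + 1 by lia, show 2 * (n + 1) - 2 = 2 * n by lia]
  push_cast at h ⊢
  linear_combination ((-1) ^ (n + 1) * 2 ^ (2 * n) * (Real.pi : ℂ) ^ (2 * (n + 1))) * h

end Bernoulli

section DoubleZeta

/-- Pairs of natural numbers are classified by the sign of the difference of their entries. -/
noncomputable def natProdTrichotomyEquiv : ((ℕ × ℕ) ⊕ (ℕ × ℕ)) ⊕ ℕ ≃ ℕ × ℕ :=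
  Equiv.ofBijective
    (Sum.elim (Sum.elim (fun p => (p.1, p.1 + p.2 + 1)) (fun p => (p.1 + p.2 + 1, p.1)))
      (fun k => (k, k))) <| by
    constructor
    · rintro ((⟨a, b⟩ | ⟨a, b⟩) | a) ((⟨c, d⟩ | ⟨c, d⟩) | c) h <;>
        simp only [Sum.elim_inl, Sum.elim_inr, Prod.mk.injEq] at h <;>
        first
        | (exfalso; lia)
        | (obtain ⟨h₁, h₂⟩ := h
           obtain rfl : a = c := by lia
           first
           | rfl
           | (obtain rfl : b = d := by lia
              rfl))
    · rintro ⟨m, n⟩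
      rcases lt_trichotomy m n with h | rfl | h
      · exact ⟨Sum.inl (Sum.inl (m, n - m - 1)), by simp; lia⟩
      · exact ⟨Sum.inr m, rfl⟩
      · exact ⟨Sum.inl (Sum.inr (n, m - n - 1)), by simp; lia⟩

lemma tsum_nat_prod_trichotomy {f : ℕ × ℕ → ℂ} (hf : Summable f) :
    ∑' p, f p = ∑' p : ℕ × ℕ, f (p.1, p.1 + p.2 + 1) + ∑' p : ℕ × ℕ, f (p.1 + p.2 + 1, p.1)
      + ∑' k, f (k, k) := by
  have h := natProdTrichotomyEquiv.summable_iff.mpr hf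
  have hl := h.comp_injective Sum.inl_injective
  rw [← natProdTrichotomyEquiv.tsum_eq, ← Function.comp_def f,
    Summable.tsum_sum hl (h.comp_injective Sum.inr_injective)]
  exact congrArg (· + _) (Summable.tsum_sum (hl.comp_injective Sum.inl_injective)
    (hl.comp_injective Sum.inr_injective))

lemma riemannZeta_nat_eq_tsum_add_one {k : ℕ} (hk : 1 < k) :
    riemannZeta k = ∑' n : ℕ, 1 / ((n : ℂ) + 1) ^ k := by
  rw [zeta_eq_tsum_one_div_nat_add_one_cpow (by simpa using hk)]
  simp

lemma summable_norm_one_div_nat_add_one_pow {k : ℕ} (hk : 1 < k) :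
    Summable fun n : ℕ => ‖1 / ((n : ℂ) + 1) ^ k‖ := by
  have h := (summable_nat_add_iff 1).mpr (Real.summable_one_div_nat_pow.mpr hk)
  refine h.congr fun n => ?_
  rw [norm_div, norm_pow, norm_one, ← Nat.cast_add_one, Complex.norm_natCast]

/-- The stuffle product of two zeta values. -/
lemma riemannZeta_mul_riemannZeta_eq_zeta2_add {a b : ℕ} (ha : 1 < a) (hb : 1 < b) :
    riemannZeta a * riemannZeta b = zeta2 a b + zeta2 b a + riemannZeta (a + b : ℕ) := by
  have hsa := summable_norm_one_div_nat_add_one_pow ha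
  have hsb := summable_norm_one_div_nat_add_one_pow hb
  rw [riemannZeta_nat_eq_tsum_add_one ha, riemannZeta_nat_eq_tsum_add_one hb,
    riemannZeta_nat_eq_tsum_add_one (by lia), tsum_mul_tsum_of_summable_norm hsa hsb,
    tsum_nat_prod_trichotomy (summable_mul_of_summable_norm hsa hsb), zeta2, zeta2]
  congr 1
  · congr 1 <;> refine tsum_congr fun p => ?_
    · push_cast
      rw [one_div_mul_one_div, add_assoc (p.1 : ℂ) p.2 1]
      ring
    · push_cast
      rw [one_div_mul_one_div, mul_comm]
      ring
  · refine tsum_congr fun k => ?_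
    rw [one_div_mul_one_div, pow_add]

end DoubleZeta

theorem Nakamura_weighted_sum_formula (N : ℕ) (hN : 2 ≤ N) :
    ∑ ν ∈ Finset.Icc 1 (N - 1),
        ((4 : ℂ) ^ ν + (4 : ℂ) ^ (N - ν)) * zeta2 (2 * N - 2 * ν) (2 * ν)
      = ((N : ℂ) + 4 / 3 + (2 / 3) * 4 ^ (N - 1)) * riemannZeta (2 * N) := by
  have hreflect : ∑ ν ∈ Finset.Icc 1 (N - 1), (4 : ℂ) ^ (N - ν) * zeta2 (2 * N - 2 * ν) (2 * ν) =
      ∑ ν ∈ Finset.Icc 1 (N - 1), (4 : ℂ) ^ ν * zeta2 (2 * ν) (2 * N - 2 * ν) := by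
    refine Finset.sum_nbij' (fun ν => N - ν) (fun ν => N - ν) ?_ ?_ ?_ ?_ ?_
    iterate 4
      intro ν hν
      simp only [Finset.mem_Icc] at *
      lia
    · intro ν hν
      rw [Finset.mem_Icc] at hν
      rw [show 2 * (N - ν) = 2 * N - 2 * ν by lia, show 2 * N - (2 * N - 2 * ν) = 2 * ν by lia]
  have hstuffle : ∀ ν ∈ Finset.Icc 1 (N - 1),
      (4 : ℂ) ^ ν * zeta2 (2 * N - 2 * ν) (2 * ν) + (4 : ℂ) ^ ν * zeta2 (2 * ν) (2 * N - 2 * ν) =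
      (4 : ℂ) ^ ν * (riemannZeta (2 * ν) * riemannZeta (2 * (N - ν : ℕ))) -
        4 ^ ν * riemannZeta (2 * N) := by
    intro ν hν
    rw [Finset.mem_Icc] at hν
    have h := riemannZeta_mul_riemannZeta_eq_zeta2_add
      (a := 2 * ν) (b := 2 * (N - ν)) (by lia) (by lia)
    rw [show 2 * ν + 2 * (N - ν) = 2 * N by lia, show zeta2 (2 * ν) (2 * (N - ν)) =
      zeta2 (2 * ν) (2 * N - 2 * ν) by rw [Nat.mul_sub], show zeta2 (2 * (N - ν)) (2 * ν) =
      zeta2 (2 * N - 2 * ν) (2 * ν) by rw [Nat.mul_sub]] at h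
    simp only [Nat.cast_mul, Nat.cast_ofNat] at h
    rw [h]
    ring
  have hgeom : ∑ ν ∈ Finset.Icc 1 (N - 1), (4 : ℂ) ^ ν = (4 ^ N - 4) / 3 := by
    have h := geom_sum_eq (show (4 : ℂ) ≠ 1 by norm_num) (N + 1)
    rw [Finset.sum_range_succ_eq_add_sum_Icc_add _ (by lia), pow_succ] at h
    linear_combination h
  simp only [add_mul _ _ (zeta2 _ _)]
  rw [Finset.sum_add_distrib, hreflect, ← Finset.sum_add_distrib, Finset.sum_congr rfl hstuffle,
    Finset.sum_sub_distrib, sum_pow_four_mul_riemannZeta_mul_riemannZeta N hN, ← Finset.sum_mul,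
    hgeom]
  obtain ⟨n, rfl⟩ : ∃ n, N = n + 1 := ⟨N - 1, by lia⟩
  rw [Nat.add_sub_cancel, pow_succ]
  ring
end
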